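/- Let M = (X, A, P, R, γ) and M̄ = (X, A, P̄, R̄, γ) be two finite MDPs over the same state set X, action set A and discount factor γ ∈ [0,1), differing only in their transition and reward functions, and suppose the rewards of M satisfy 0 ≤ R(x,a,y) ≤ R⁰ for all (x,a,y). Let ε > 0 and set ε' := (1−γ)² ε / |X|. If |P(x,a,y) R(x,a,y) − P̄(x,a,y) R̄(x,a,y)| ≤ ε' R⁰ and |P(x,a,y) − P̄(x,a,y)| ≤ ε' for all (x,a,y) ∈ X × A × X, then for every stationary policy π and every (x,a) ∈ X × A, |Q^π_M(x,a) − Q^π_M̄(x,a)| ≤ ε R⁰. -/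

import Mathlib

/-!
`Q` and `Qbar` are fixed points of Bellman operators `T` and `Tbar`, which are `γ`-contractions for
the sup norm. Hence the distance from `Q` to the fixed point `Qbar` of `Tbar` is at most
`‖Q - Tbar Q‖ / (1 - γ) = ‖T Q - Tbar Q‖ / (1 - γ)`. Here `‖T Q - Tbar Q‖` is at most the `ℓ¹`
perturbation of `P • R` plus `γ ‖Q‖` times that of `P`, and comparing the fixed point `Q` of `T`
with `0` gives `‖Q‖ ≤ R0 / (1 - γ)`. The factor `|X|` in `ε'` pays for passing from entrywise to
`ℓ¹` bounds.
-/

open Function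
open scoped NNReal

lemma norm_sum_smul_le_sum_norm_mul_norm {ι 𝕜 E : Type*} [Fintype ι] [SeminormedRing 𝕜]
    [SeminormedAddCommGroup E] [Module 𝕜 E] [IsBoundedSMul 𝕜 E] (w : ι → 𝕜) (g : ι → E) :
    ‖∑ i, w i • g i‖ ≤ (∑ i, ‖w i‖) * ‖g‖ := by
  rw [Finset.sum_mul]
  refine norm_sum_le_of_le _ fun i _ => (norm_smul_le _ _).trans ?_
  gcongr
  exact norm_le_pi_norm g i

lemma norm_sum_smul_le_norm {ι 𝕜 E : Type*} [Fintype ι] [SeminormedRing 𝕜]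
    [SeminormedAddCommGroup E] [Module 𝕜 E] [IsBoundedSMul 𝕜 E] {w : ι → 𝕜}
    (hw : ∑ i, ‖w i‖ ≤ 1) (g : ι → E) : ‖∑ i, w i • g i‖ ≤ ‖g‖ :=
  (norm_sum_smul_le_sum_norm_mul_norm w g).trans <| mul_le_of_le_one_left (norm_nonneg g) hw

lemma sum_norm_le_one_of_nonneg {ι : Type*} [Fintype ι] {w : ι → ℝ} (hw : ∀ i, 0 ≤ w i)
    (hw1 : ∑ i, w i = 1) : ∑ i, ‖w i‖ ≤ 1 := by
  simp only [Real.norm_of_nonneg (hw _), hw1, le_refl]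

section MarkovDecisionProcess

variable {X A E : Type*} [Fintype A] [NormedAddCommGroup E] [NormedSpace ℝ E]

/-- The state value function `V(y) = ∑ b, π(y, b) Q(y, b)` of the policy `π` for the state-action
values `Q`. Values lie in a normed space, so that vector-valued rewards are covered. -/
def stateValue (π : X → A → ℝ) (Q : X → A → E) (y : X) : E :=
  ∑ b, π y b • Q y b

lemma stateValue_sub (π : X → A → ℝ) (Q Q' : X → A → E) :
    stateValue π (Q - Q') = stateValue π Q - stateValue π Q' := by
  ext y
  simp [stateValue, smul_sub]

variable [Fintype X]

lemma norm_stateValue_le {π : X → A → ℝ} (hπ : ∀ y, ∑ b, ‖π y b‖ ≤ 1) (Q : X → A → E) :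
    ‖stateValue π Q‖ ≤ ‖Q‖ :=
  (pi_norm_le_iff_of_nonneg (norm_nonneg Q)).2 fun y =>
    (norm_sum_smul_le_norm (hπ y) (Q y)).trans (norm_le_pi_norm Q y)

/-- The Bellman evaluation operator of the policy `π`, whose fixed point is the value function
`Q^π` of the MDP with transitions `P`, rewards `R` and discount factor `γ`. -/
def bellmanOperator (γ : ℝ≥0) (P : X → A → X → ℝ) (R : X → A → X → E) (π : X → A → ℝ)
    (Q : X → A → E) (x : X) (a : A) : E :=
  ∑ y, P x a y • (R x a y + (γ : ℝ) • stateValue π Q y)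

variable {γ : ℝ≥0} {P P' : X → A → X → ℝ} {R R' : X → A → X → E} {π : X → A → ℝ}

lemma bellmanOperator_apply_eq_add (Q : X → A → E) (x : X) (a : A) :
    bellmanOperator γ P R π Q x a =
      ∑ y, P x a y • R x a y + (γ : ℝ) • ∑ y, P x a y • stateValue π Q y := by
  simp only [bellmanOperator, smul_add, Finset.sum_add_distrib, Finset.smul_sum,
    smul_comm (γ : ℝ)]

lemma bellmanOperator_zero_apply (x : X) (a : A) :
    bellmanOperator γ P R π 0 x a = ∑ y, P x a y • R x a y := by
  simp [bellmanOperator, stateValue]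

lemma bellmanOperator_apply_sub_apply (Q Q' : X → A → E) (x : X) (a : A) :
    bellmanOperator γ P R π Q x a - bellmanOperator γ P R π Q' x a =
      (γ : ℝ) • ∑ y, P x a y • stateValue π (Q - Q') y := by
  simp only [bellmanOperator_apply_eq_add, stateValue_sub, Pi.sub_apply, smul_sub,
    Finset.sum_sub_distrib, add_sub_add_left_eq_sub]

lemma contractingWith_bellmanOperator (hγ : γ < 1) (hP : ∀ x a, ∑ y, ‖P x a y‖ ≤ 1)
    (hπ : ∀ y, ∑ b, ‖π y b‖ ≤ 1) : ContractingWith γ (bellmanOperator γ P R π) := by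
  refine ⟨hγ, LipschitzWith.of_dist_le_mul fun Q Q' => ?_⟩
  refine (dist_pi_le_iff (by positivity)).2 fun x => (dist_pi_le_iff (by positivity)).2 fun a => ?_
  rw [dist_eq_norm, dist_eq_norm, bellmanOperator_apply_sub_apply, norm_smul, NNReal.norm_eq]
  gcongr
  exact (norm_sum_smul_le_norm (hP x a) _).trans (norm_stateValue_le hπ _)

lemma norm_bellmanOperator_sub_le {δR δP : ℝ} {x : X} {a : A}
    (hδR : ‖∑ y, P x a y • R x a y - ∑ y, P' x a y • R' x a y‖ ≤ δR)
    (hδP : ∑ y, ‖P x a y - P' x a y‖ ≤ δP) (hπ : ∀ y, ∑ b, ‖π y b‖ ≤ 1) (Q : X → A → E) :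
    ‖bellmanOperator γ P R π Q x a - bellmanOperator γ P' R' π Q x a‖ ≤ δR + γ * (δP * ‖Q‖) := by
  have transition_part : ‖∑ y, (P x a y - P' x a y) • stateValue π Q y‖ ≤ δP * ‖Q‖ :=
    (norm_sum_smul_le_sum_norm_mul_norm _ _).trans <|
      mul_le_mul hδP (norm_stateValue_le hπ Q) (norm_nonneg _)
        ((Finset.sum_nonneg fun _ _ => norm_nonneg _).trans hδP)
  rw [bellmanOperator_apply_eq_add, bellmanOperator_apply_eq_add, add_sub_add_comm, ← smul_sub,
    ← Finset.sum_sub_distrib (f := fun y => P x a y • stateValue π Q y)]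
  simp only [← sub_smul]
  refine norm_add_le_of_le hδR ?_
  rw [norm_smul, NNReal.norm_eq]
  gcongr

variable [Nonempty X] [Nonempty A] {Q Q' : X → A → E}

lemma norm_le_of_isFixedPt_bellmanOperator {R0 : ℝ} (hγ : γ < 1)
    (hP : ∀ x a, ∑ y, ‖P x a y‖ ≤ 1) (hπ : ∀ y, ∑ b, ‖π y b‖ ≤ 1)
    (hR : ∀ x a, ‖∑ y, P x a y • R x a y‖ ≤ R0) (hQ : IsFixedPt (bellmanOperator γ P R π) Q) :
    ‖Q‖ ≤ R0 / (1 - γ) := by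
  have hT := contractingWith_bellmanOperator (R := R) hγ hP hπ
  have hγ' : 0 < 1 - (γ : ℝ) := hT.one_sub_K_pos
  have norm_apply_zero : ‖bellmanOperator γ P R π 0‖ ≤ R0 :=
    (pi_norm_le_iff_of_nonempty _).2 fun x => (pi_norm_le_iff_of_nonempty _).2 fun a =>
      (congrArg norm (bellmanOperator_zero_apply x a)).trans_le (hR x a)
  calc ‖Q‖ = dist 0 Q := (dist_zero_left Q).symm
    _ ≤ dist 0 (bellmanOperator γ P R π 0) / (1 - γ) := hT.dist_le_of_fixedPoint 0 hQ
    _ ≤ R0 / (1 - γ) := by rw [dist_zero_left]; gcongr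

lemma norm_sub_le_of_isFixedPt_bellmanOperator {δR δP : ℝ} (hγ : γ < 1)
    (hP' : ∀ x a, ∑ y, ‖P' x a y‖ ≤ 1) (hπ : ∀ y, ∑ b, ‖π y b‖ ≤ 1)
    (hδR : ∀ x a, ‖∑ y, P x a y • R x a y - ∑ y, P' x a y • R' x a y‖ ≤ δR)
    (hδP : ∀ x a, ∑ y, ‖P x a y - P' x a y‖ ≤ δP)
    (hQ : IsFixedPt (bellmanOperator γ P R π) Q) (hQ' : IsFixedPt (bellmanOperator γ P' R' π) Q') :
    ‖Q - Q'‖ ≤ (δR + γ * (δP * ‖Q‖)) / (1 - γ) := by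
  have hT' := contractingWith_bellmanOperator (R := R') hγ hP' hπ
  have hγ' : 0 < 1 - (γ : ℝ) := hT'.one_sub_K_pos
  have norm_operator_sub :
      ‖bellmanOperator γ P R π Q - bellmanOperator γ P' R' π Q‖ ≤ δR + γ * (δP * ‖Q‖) :=
    (pi_norm_le_iff_of_nonempty _).2 fun x => (pi_norm_le_iff_of_nonempty _).2 fun a =>
      norm_bellmanOperator_sub_le (hδR x a) (hδP x a) hπ Q
  calc ‖Q - Q'‖ = dist Q Q' := (dist_eq_norm Q Q').symm
    _ ≤ dist Q (bellmanOperator γ P' R' π Q) / (1 - γ) := hT'.dist_le_of_fixedPoint Q hQ'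
    _ ≤ (δR + γ * (δP * ‖Q‖)) / (1 - γ) := by
      rw [dist_eq_norm]
      nth_rw 1 [← hQ.eq]
      gcongr

end MarkovDecisionProcess

theorem stmt_1_general {X A E : Type*} [Fintype X] [Nonempty X] [Fintype A] [Nonempty A]
    [NormedAddCommGroup E] [NormedSpace ℝ E] {γ : ℝ≥0} (hγ : γ < 1)
    {P Pbar : X → A → X → ℝ} {R Rbar : X → A → X → E} {R0 : ℝ}
    (hP : ∀ x a, ∑ y, ‖P x a y‖ ≤ 1) (hPbar : ∀ x a, ∑ y, ‖Pbar x a y‖ ≤ 1)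
    (hR : ∀ x a y, ‖R x a y‖ ≤ R0)
    {ε ε' : ℝ} (hε' : ε' = (1 - γ) ^ 2 * ε / (Fintype.card X : ℝ))
    (hclose1 : ∀ x a y, ‖P x a y • R x a y - Pbar x a y • Rbar x a y‖ ≤ ε' * R0)
    (hclose2 : ∀ x a y, ‖P x a y - Pbar x a y‖ ≤ ε')
    {π : X → A → ℝ} (hπ : ∀ x, ∑ a, ‖π x a‖ ≤ 1) {Q Qbar : X → A → E}
    (hQ : IsFixedPt (bellmanOperator γ P R π) Q)
    (hQbar : IsFixedPt (bellmanOperator γ Pbar Rbar π) Qbar) :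
    ‖Q - Qbar‖ ≤ ε * R0 := by
  have hγ' : 0 < 1 - (γ : ℝ) := sub_pos.2 (mod_cast hγ)
  have hε'_nonneg : 0 ≤ ε' := by
    inhabit X; inhabit A
    exact (norm_nonneg _).trans (hclose2 default default default)
  have expected_reward_le (x : X) (a : A) : ‖∑ y, P x a y • R x a y‖ ≤ R0 :=
    (norm_sum_smul_le_norm (hP x a) _).trans ((pi_norm_le_iff_of_nonempty _).2 (hR x a))
  have expected_reward_sub_le (x : X) (a : A) :
      ‖∑ y, P x a y • R x a y - ∑ y, Pbar x a y • Rbar x a y‖ ≤ Fintype.card X * (ε' * R0) := by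
    rw [← Finset.sum_sub_distrib]
    simpa using norm_sum_le_of_le Finset.univ fun y _ => hclose1 x a y
  have transition_sub_le (x : X) (a : A) :
      ∑ y, ‖P x a y - Pbar x a y‖ ≤ Fintype.card X * ε' := by
    simpa using Finset.sum_le_card_nsmul Finset.univ _ _ fun y _ => hclose2 x a y
  calc ‖Q - Qbar‖
      ≤ (Fintype.card X * (ε' * R0) + γ * (Fintype.card X * ε' * ‖Q‖)) / (1 - γ) :=
        norm_sub_le_of_isFixedPt_bellmanOperator hγ hPbar hπ expected_reward_sub_le
          transition_sub_le hQ hQbar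
    _ ≤ (Fintype.card X * (ε' * R0) + γ * (Fintype.card X * ε' * (R0 / (1 - γ)))) / (1 - γ) := by
        gcongr
        exact norm_le_of_isFixedPt_bellmanOperator hγ hP hπ expected_reward_le hQ
    _ = ε * R0 := by
        rw [hε']
        field_simp
        ring

/-- Dimension-respecting simulation lemma: if the transition parameters of two
MDPs are `ε'`-close and the `P·R` products are `ε'R⁰`-close, with
`ε' = (1-γ)² ε / |X|`, then for every stationary policy the value functions of
the two MDPs are `εR⁰`-close. -/
theorem stmt_1
    {X A : Type*} [Fintype X] [Nonempty X] [Fintype A] [Nonempty A]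
    (γ : ℝ) (hγ0 : 0 ≤ γ) (hγ1 : γ < 1)
    (P Pbar R Rbar : X → A → X → ℝ) (R0 : ℝ)
    (hP0 : ∀ x a y, 0 ≤ P x a y) (hP1 : ∀ x a, ∑ y, P x a y = 1)
    (hPbar0 : ∀ x a y, 0 ≤ Pbar x a y) (hPbar1 : ∀ x a, ∑ y, Pbar x a y = 1)
    (hR : ∀ x a y, 0 ≤ R x a y ∧ R x a y ≤ R0)
    (ε ε' : ℝ) (hε : 0 < ε)
    (hε' : ε' = (1 - γ) ^ 2 * ε / (Fintype.card X : ℝ))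
    (hclose1 : ∀ x a y, |P x a y * R x a y - Pbar x a y * Rbar x a y| ≤ ε' * R0)
    (hclose2 : ∀ x a y, |P x a y - Pbar x a y| ≤ ε')
    (π : X → A → ℝ) (hπ0 : ∀ x a, 0 ≤ π x a) (hπ1 : ∀ x, ∑ a, π x a = 1)
    (Q Qbar : X → A → ℝ)
    (hQ : ∀ x a, Q x a = ∑ y, P x a y * (R x a y + γ * ∑ b, π y b * Q y b))
    (hQbar : ∀ x a,
      Qbar x a = ∑ y, Pbar x a y * (Rbar x a y + γ * ∑ b, π y b * Qbar y b)) :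
    ∀ x a, |Q x a - Qbar x a| ≤ ε * R0 := by
  intro x a
  have norm_Q_sub_Qbar : ‖Q - Qbar‖ ≤ ε * R0 :=
    stmt_1_general (γ := ⟨γ, hγ0⟩) hγ1
      (fun x a => sum_norm_le_one_of_nonneg (hP0 x a) (hP1 x a))
      (fun x a => sum_norm_le_one_of_nonneg (hPbar0 x a) (hPbar1 x a))
      (fun x a y => (Real.norm_of_nonneg (hR x a y).1).trans_le (hR x a y).2) hε' hclose1 hclose2
      (fun x => sum_norm_le_one_of_nonneg (hπ0 x) (hπ1 x))
      (funext₂ fun x a => (hQ x a).symm) (funext₂ fun x a => (hQbar x a).symm)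
  exact (norm_le_pi_norm _ a).trans <| (norm_le_pi_norm _ x).trans norm_Q_sub_Qbar
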